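/- Local error of the first step for semi-linear problems (Lemma A.2): Assume the weak CFL condition 7 c_inv c_M τ < 3 h and consistent initial data with ∂_τ p⁰ = ṗ(0). Then (1 − 2τC) ‖u¹ − u⁰‖_{A + η_Ω M}² + (1 − 2τC) ‖p¹ − p⁰‖_{A_Γ + η_Γ M_Γ}² + τ ( 1 − c_M h (1 + 8 τ² L_M) − (c_{α,M} τ h + c_A τ h⁻¹)(2 + 8 τ² L_A) ) ‖∂_τ p¹ − ṗ(0)‖_{M_Γ}² ≤ τ² ‖u̇(0)‖_{A + η_Ω M}² + τ² ‖ṗ(0)‖_{A_Γ + η_Γ M_Γ}² + 2 τ² ‖ṗ(0)‖_{A₂₂}² + 4 τ³ C ‖ṗ(0)‖_{A₂₂ + η_Ω M₂₂}² + 2 τ³ L, where C := max{2L_A, √(8L_M), L_{A_Γ}, 2√(L_{M_Γ})} and L := L_Ω + L_Γ. -/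

import Mathlib

open Matrix Finset

/-- The squared "energy" norm `‖x‖_S² = xᵀ S x` induced by a matrix `S`. -/
noncomputable def vecNormSq {ι : Type*} [Fintype ι] (S : Matrix ι ι ℝ) (x : ι → ℝ) : ℝ :=
  x ⬝ᵥ S.mulVec x

/-- The constant `η` from Lemma A.1/A.2: `η := √(2 L_M)` if `L_A < √(2 L_M)`, and
`η := L_A + √(L_A² − 2 L_M)` otherwise. -/
noncomputable def etaConst (LA LM : ℝ) : ℝ :=
  if LA < Real.sqrt (2 * LM) then Real.sqrt (2 * LM) else LA + Real.sqrt (LA ^ 2 - 2 * LM)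

section LieAux

variable {V : Type*} [AddCommGroup V] [Module ℝ V]

/-- symmetric positive semidefinite bilinear form -/
structure SPB (B : LinearMap.BilinForm ℝ V) : Prop where
  sym : ∀ x y, B x y = B y x
  pos : ∀ x, 0 ≤ B x x

lemma SPB.quad {B : LinearMap.BilinForm ℝ V} (hB : SPB B) {α β γ : ℝ} (hα : 0 ≤ α) (hγ : 0 ≤ γ)
    (h : β ^ 2 ≤ α * γ) (x y : V) : 0 ≤ α * B x x + 2 * β * B x y + γ * B y y := by
  rcases hα.eq_or_lt with h0 | h0
  · subst h0
    have : β = 0 := by nlinarith [sq_nonneg β]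
    subst this
    have := mul_nonneg hγ (hB.pos y)
    linarith
  · have h1 := hB.pos (α • x + β • y)
    simp only [map_add, map_smul, LinearMap.add_apply, LinearMap.smul_apply, smul_eq_mul,
      hB.sym y x] at h1
    have h2 : 0 ≤ (α * γ - β ^ 2) * B y y := mul_nonneg (by linarith) (hB.pos y)
    have h3 : 0 ≤ α * (α * B x x + 2 * β * B x y + γ * B y y) := by nlinarith
    exact nonneg_of_mul_nonneg_right h3 h0

lemma SPB.aform {B : LinearMap.BilinForm ℝ V} (hB : SPB B) {l σ b p : ℝ} (hl : 0 ≤ l)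
    (hp : p * (1 + 4 * l) = 1) (hp0 : 0 ≤ p)
    (h0 : 0 ≤ 4 * l * p - σ * l - b ^ 2)
    (h1 : (8 * l * p - b) ^ 2 ≤ (4 * l * p - σ * l - b ^ 2) * (8 * l + 16 * l * p))
    (E G Q T : V) :
    σ * l * B T T + 2 * b * B E T ≤ 4 * l * B (T + G + Q) (T + G + Q) + B (E - Q) (E - Q)
      + B (G - Q) (G - Q) + 8 * l * B Q Q := by
  have e1 := hB.pos (E - Q - b • T)
  have e2 := mul_nonneg hp0 (hB.pos ((1 + 4 * l) • (G - Q) + (4 * l) • (T + (2 : ℝ) • Q)))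
  have e3 := hB.quad h0 (by positivity) h1 T Q
  simp only [map_add, map_sub, map_smul, LinearMap.add_apply, LinearMap.sub_apply,
    LinearMap.smul_apply, smul_eq_mul, hB.sym G E, hB.sym Q E, hB.sym T E, hB.sym Q G, hB.sym T G,
    hB.sym T Q] at e1 e2 e3 ⊢
  linear_combination e1 + e2 + e3 + (((1 + 4 * l) * (B G G - 2 * B G Q + B Q Q)
    + 8 * l * (B G T + 2 * B G Q - B Q T - 2 * B Q Q) + 4 * l * (B T T + 4 * B Q T + 4 * B Q Q))) * hp

lemma SPB.mform {B : LinearMap.BilinForm ℝ V} (hB : SPB B) {σ s b η LM C ρ : ℝ}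
    (hσ : σ * s = 1) (hs : 0 ≤ s) (hσ0 : 0 ≤ σ) (hσ2 : σ ≤ 2) (hLM : 0 ≤ LM)
    (hC : 2 * LM + η ^ 2 ≤ C * η)
    (hρ0 : 0 ≤ ρ) (hρ : η ^ 2 ≤ (2 * η ^ 2 + (4 - 2 * σ) * LM) * ρ)
    (E G Q T φ : V)
    (hrem : 0 ≤ (1 - 2 * b - b ^ 2 * s) * B E E + (1 + η - s - ρ) * B (E + G) (E + G)
      + 2 * (b * s) * B E (E + G) + (8 - 4 * σ) * LM * B G G) :
    σ * LM * B T T + 2 * B (E + G) φ - 2 * b * B E φ + 2 * η * B (E + G) (T + G + Q) + 2 * b * B E E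
     ≤ 2 * C * η * B (T + G + Q) (T + G + Q) + B E E + (1 + η) * B (E + G) (E + G)
      + 8 * LM * B G G + 4 * C * η * B Q Q + σ * B φ φ := by
  have e1 := mul_nonneg hσ0 (hB.pos (φ - s • (E + G - b • E)))
  have e2 := hB.quad (α := 2 * η ^ 2 + (4 - 2 * σ) * LM) (β := -η) (γ := ρ)
    (by nlinarith [sq_nonneg η, mul_nonneg (by linarith : 0 ≤ 2 - σ) hLM]) hρ0 (by linarith)
    (T + G + Q) (E + G)
  have hsl : 0 ≤ σ * LM := mul_nonneg hσ0 hLM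
  have e3 := mul_nonneg hsl (hB.pos (T + (2:ℝ) • G + (2:ℝ) • Q))
  have e4 := mul_nonneg hsl (hB.pos (G - Q))
  have e5 := mul_nonneg (by linarith : 0 ≤ 2 * (C * η - 2 * LM - η ^ 2)) (hB.pos (T + G + Q))
  have e6 := mul_nonneg (by nlinarith [sq_nonneg η, mul_nonneg (by linarith : 0 ≤ 2 - σ) hLM] :
    0 ≤ 4 * (C * η) - 4 * σ * LM) (hB.pos Q)
  simp only [map_add, map_sub, map_smul, LinearMap.add_apply, LinearMap.sub_apply,
    LinearMap.smul_apply, smul_eq_mul, hB.sym G E, hB.sym Q E, hB.sym T E, hB.sym φ E, hB.sym Q G,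
    hB.sym T G, hB.sym φ G, hB.sym T Q, hB.sym φ Q, hB.sym φ T] at e1 e2 e3 e4 e5 e6 hrem ⊢
  linear_combination e1 + e2 + e3 + 2 * e4 + e5 + e6 + hrem
    + (-2 * (B E φ + B G φ - b * B E φ) + s * ((1-b)^2 * B E E + 2 * (1-b) * B E G + B G G)) * hσ

lemma scal_big {η l LM : ℝ} (hη : 0 < η) (hLM : 0 ≤ LM) (h2 : 2 * l * η ≤ η ^ 2 + 2 * LM)
    (h3 : 2 * LM ≤ η ^ 2) (hl : 1 / 4 ≤ l) :
    (l + η ^ 2 / (2 * (η ^ 2 + LM)) - η - 1 / 4) * (1 + 4 * LM) ≤ 4 * LM := by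
  obtain ⟨m, rfl⟩ : ∃ m, LM = m * η ^ 2 := ⟨LM / η ^ 2, by field_simp⟩
  have hη2 : 0 < η ^ 2 := by positivity
  have hm0 : 0 ≤ m := nonneg_of_mul_nonneg_left hLM hη2
  have hm1 : m ≤ 1 / 2 := by
    have : (2 * m) * η ^ 2 ≤ 1 * η ^ 2 := by linarith
    have := le_of_mul_le_mul_right this hη2
    linarith
  have hl2 : l ≤ η * (1 / 2 + m) := by
    have : l * (2 * η) ≤ η * (1 / 2 + m) * (2 * η) := by linarith
    exact le_of_mul_le_mul_right this (by linarith)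
  have hρ : η ^ 2 / (2 * (η ^ 2 + m * η ^ 2)) = 1 / (2 * (1 + m)) := by
    field_simp
  rw [hρ]
  have hη3 : 1 / (2 * (1 + 2 * m)) ≤ η := by
    rw [div_le_iff₀ (by positivity)]; linarith
  set ν := l + 1 / (2 * (1 + m)) - η - 1 / 4 with hν
  have hν0 : ν ≤ m / (2 * (1 + m) * (1 + 2 * m)) := by
    have a1 : η * (m - 1 / 2) ≤ 1 / (2 * (1 + 2 * m)) * (m - 1 / 2) :=
      mul_le_mul_of_nonpos_right hη3 (by linarith)
    have a2 : 1 / (2 * (1 + 2 * m)) * (m - 1 / 2) + 1 / (2 * (1 + m)) - 1 / 4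
      = m / (2 * (1 + m) * (1 + 2 * m)) := by field_simp; ring
    rw [← a2]; linarith
  have hy : m / (1 + 2 * m) ^ 2 ≤ 4 * (m * η ^ 2) := by
    have a1 : (1 / (2 * (1 + 2 * m))) ^ 2 ≤ η ^ 2 := pow_le_pow_left₀ (by positivity) hη3 2
    have a2 : m / (1 + 2 * m) ^ 2 = 4 * (m * (1 / (2 * (1 + 2 * m))) ^ 2) := by field_simp; ring
    rw [a2]
    have := mul_le_mul_of_nonneg_left a1 hm0
    linarith
  set y := 4 * (m * η ^ 2)
  have hy0 : 0 ≤ y := by positivity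
  have a3 : m / (2 * (1 + m) * (1 + 2 * m)) ≤ 1 / 2 := by
    rw [div_le_iff₀ (by positivity)]; nlinarith
  have a4 : m / (2 * (1 + m) * (1 + 2 * m)) ≤
      m / (1 + 2 * m) ^ 2 * (1 - m / (2 * (1 + m) * (1 + 2 * m))) := by
    rw [← sub_nonneg]
    have : m / (1 + 2 * m) ^ 2 * (1 - m / (2 * (1 + m) * (1 + 2 * m)))
      - m / (2 * (1 + m) * (1 + 2 * m)) = m * (2 * (1 + m) * (1 + 2 * m) - m - (1 + 2 * m) ^ 2) /
        (2 * (1 + m) * (1 + 2 * m) ^ 3) := by field_simp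
    rw [this]
    apply div_nonneg (mul_nonneg hm0 (by nlinarith)) (by positivity)
  have a5 := mul_le_mul_of_nonneg_right hν0 (by linarith : 0 ≤ 1 + y)
  have a6 := mul_le_mul_of_nonneg_right hy
    (by linarith : 0 ≤ 1 - m / (2 * (1 + m) * (1 + 2 * m)))
  linarith

lemma scal_mid {η l LM s : ℝ} (hη : 0 < η) (hLM : 0 ≤ LM) (h2 : 2 * l * η ≤ η ^ 2 + 2 * LM)
    (h3 : 2 * LM ≤ η ^ 2) (hl0 : 1 / 16 ≤ l) (hl : l ≤ 1 / 4) (hs : s = 1 / 2 + 27 / 20 * l) :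
    (s / 5) ^ 2 ≤ (3 / 5 - s / 25) *
      (1 + η - s - η ^ 2 / (2 * η ^ 2 + (4 - 2 * (1 / s)) * LM)) := by
  obtain ⟨m, rfl⟩ : ∃ m, LM = m * η ^ 2 := ⟨LM / η ^ 2, by field_simp⟩
  have hη2 : 0 < η ^ 2 := by positivity
  have hm0 : 0 ≤ m := nonneg_of_mul_nonneg_left hLM hη2
  have hm1 : m ≤ 1 / 2 := by
    have : (2 * m) * η ^ 2 ≤ 1 * η ^ 2 := by linarith
    have := le_of_mul_le_mul_right this hη2
    linarith
  have hl2 : l ≤ η * (1 / 2 + m) := by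
    have : l * (2 * η) ≤ η * (1 / 2 + m) * (2 * η) := by linarith
    exact le_of_mul_le_mul_right this (by linarith)
  have hs0 : 1 / 2 < s := by linarith
  have hs1 : s ≤ 0.8375 := by rw [hs]; norm_num; linarith
  have hsp : 0 < s := by linarith
  have hη3 : l * (2 / (1 + 2 * m)) ≤ η := by
    rw [mul_div_assoc', div_le_iff₀ (by positivity)]; linarith
  have hκp : 0 < 1 + 27 / 5 * l := by linarith
  set κ := (27 / 20) / (1 + 27 / 5 * l) with hκ
  have hκ0 : 0 < κ := by positivity
  have hω : 0 ≤ 2 - 1 / s := by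
    rw [sub_nonneg, div_le_iff₀ hsp]; linarith
  have hρ : η ^ 2 / (2 * η ^ 2 + (4 - 2 * (1 / s)) * (m * η ^ 2)) = 1 / (2 + 2 * (2 - 1 / s) * m) := by
    have e : 2 * η ^ 2 + (4 - 2 * (1 / s)) * (m * η ^ 2) = (2 + 2 * (2 - 1 / s) * m) * η ^ 2 := by
      ring
    have : 0 < 2 + 2 * (2 - 1 / s) * m := by positivity
    rw [e, div_eq_div_iff (by positivity) (by positivity)]; ring
  rw [hρ]
  have hr : 1 / (2 + 2 * (2 - 1 / s) * m) ≤ 1 / 2 - l * κ * (2 * m) := by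
    have e1 : 2 * (l * κ) = (2 - 1 / s) / (2 + (2 - 1 / s)) := by
      rw [hκ, hs]
      have : (1 / 2 + 27 / 20 * l) ≠ 0 := by linarith
      have : 2 + (2 - 1 / (1 / 2 + 27 / 20 * l)) ≠ 0 := by
        rw [← hs]; linarith
      rw [eq_div_iff this]
      field_simp
      ring
    set ω := 2 - 1 / s
    have e2 : l * κ * (2 * m) = ω / (2 + ω) * m := by rw [← e1]; ring
    rw [e2, ← sub_nonneg]
    have e3 : 1 / 2 - ω / (2 + ω) * m - 1 / (2 + 2 * ω * m)
      = ω ^ 2 * m * (1 - 2 * m) / (2 * (1 + ω * m) * (2 + ω)) := by field_simp; ring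
    rw [e3]
    have : 0 ≤ 1 - 2 * m := by linarith
    positivity
  set t := 3.19 - 6.35 * l + 8.38 * l ^ 2 with ht
  have htκ : t ^ 2 ≤ 8 * κ := by
    rw [hκ, mul_div_assoc', le_div_iff₀ hκp, ht]
    have hx : 0 ≤ l - 1 / 16 := by linarith
    have hy : 0 ≤ 1 / 4 - l := by linarith
    linear_combination 57972119/112500 * mul_nonneg (pow_nonneg hx 0) (pow_nonneg hy 5)
        + 3309211/28125 * mul_nonneg (pow_nonneg hx 1) (pow_nonneg hy 4)
        + 128047496/28125 * mul_nonneg (pow_nonneg hx 2) (pow_nonneg hy 3)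
        + 278243744/28125 * mul_nonneg (pow_nonneg hx 3) (pow_nonneg hy 2)
        + 171012544/28125 * mul_nonneg (pow_nonneg hx 4) (pow_nonneg hy 1)
        + 21334784/28125 * mul_nonneg (pow_nonneg hx 5) (pow_nonneg hy 0)
  have hk : t ≤ 2 / (1 + 2 * m) + κ * (1 + 2 * m) := by
    have : 0 ≤ κ * (1 + 2 * m) ^ 2 - t * (1 + 2 * m) + 2 := by
      have : 0 ≤ 8 * κ * (κ * (1 + 2 * m) ^ 2 - t * (1 + 2 * m) + 2) := by
        nlinarith [sq_nonneg (2 * κ * (1 + 2 * m) - t)]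
      exact nonneg_of_mul_nonneg_right this (by positivity)
    have e : 2 / (1 + 2 * m) + κ * (1 + 2 * m) - t =
      (κ * (1 + 2 * m) ^ 2 - t * (1 + 2 * m) + 2) / (1 + 2 * m) := by field_simp; ring
    have := div_nonneg this (by positivity : 0 ≤ 1 + 2 * m)
    linarith
  have hl00 : 0 ≤ l := by linarith
  have hγ : l * (t - κ - 27 / 20) ≤ 1 + η - s - 1 / (2 + 2 * (2 - 1 / s) * m) := by
    have := mul_le_mul_of_nonneg_left hk hl00
    rw [hs] at *
    nlinarith
  have hfin : (s / 5) ^ 2 ≤ (3 / 5 - s / 25) * (l * (t - κ - 27 / 20)) := by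
    have hκm : κ * (1 + 27 / 5 * l) = 27 / 20 := by rw [hκ]; field_simp
    have e : (3 / 5 - s / 25) * (l * (t - κ - 27 / 20)) * (1 + 27 / 5 * l) =
      (3 / 5 - s / 25) * (l * ((t - 27 / 20) * (1 + 27 / 5 * l) - 27 / 20)) := by
      rw [← hκm]; ring
    refine le_of_mul_le_mul_right ?_ hκp
    rw [e, hs, ht]
    have hx : 0 ≤ l - 1 / 16 := by linarith
    have hy : 0 ≤ 1 / 4 - l := by linarith
    linear_combination 552739261/30375000 * mul_nonneg (pow_nonneg hx 0) (pow_nonneg hy 5)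
        + 2111026307/7593750 * mul_nonneg (pow_nonneg hx 1) (pow_nonneg hy 4)
        + 3187290452/3796875 * mul_nonneg (pow_nonneg hx 2) (pow_nonneg hy 3)
        + 2969399408/3796875 * mul_nonneg (pow_nonneg hx 3) (pow_nonneg hy 2)
        + 797871904/3796875 * mul_nonneg (pow_nonneg hx 4) (pow_nonneg hy 1)
        + 20064128/3796875 * mul_nonneg (pow_nonneg hx 5) (pow_nonneg hy 0)
  exact hfin.trans (mul_le_mul_of_nonneg_left hγ (by linarith))

/-- combination of the two forms -/
lemma comb {a m : LinearMap.BilinForm ℝ V} (ha : SPB a) (hm : SPB m)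
    {σ s b η l LM C ρ p L : ℝ} (hl : 0 ≤ l) (hLC : 2 * l ≤ C) (hL : 0 ≤ L)
    (hp : p * (1 + 4 * l) = 1) (hp0 : 0 ≤ p)
    (h0 : 0 ≤ 4 * l * p - σ * l - b ^ 2)
    (h1 : (8 * l * p - b) ^ 2 ≤ (4 * l * p - σ * l - b ^ 2) * (8 * l + 16 * l * p))
    (hσ : σ * s = 1) (hs : 0 ≤ s) (hσ0 : 0 ≤ σ) (hσ2 : σ ≤ 2) (hLM : 0 ≤ LM)
    (hC : 2 * LM + η ^ 2 ≤ C * η)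
    (hρ0 : 0 ≤ ρ) (hρ : η ^ 2 ≤ (2 * η ^ 2 + (4 - 2 * σ) * LM) * ρ)
    (E G Q T φ : V)
    (hrem : 0 ≤ (1 - 2 * b - b ^ 2 * s) * m E E + (1 + η - s - ρ) * m (E + G) (E + G)
      + 2 * (b * s) * m E (E + G) + (8 - 4 * σ) * LM * m G G)
    (hφ : m φ φ ≤ L + l * a T T + LM * m T T)
    (hE : m E φ = m E E + a E T) :
    2 * m (E + G) φ + 2 * η * m (E + G) (T + G + Q) ≤
      2 * C * (a (T + G + Q) (T + G + Q) + η * m (T + G + Q) (T + G + Q))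
      + a (E - Q) (E - Q) + a (G - Q) (G - Q) + m E E + (1 + η) * m (E + G) (E + G)
      + 8 * LM * m G G + 4 * C * (a Q Q + η * m Q Q) + 2 * L := by
  have f1 := ha.aform hl hp hp0 h0 h1 E G Q T
  have f2 := hm.mform hσ hs hσ0 hσ2 hLM hC hρ0 hρ E G Q T φ hrem
  have f3 := mul_le_mul_of_nonneg_left hφ hσ0
  have f4 := mul_le_mul_of_nonneg_right hσ2 hL
  have f5 := mul_le_mul_of_nonneg_right hLC (ha.pos (T + G + Q))
  have f6 := mul_le_mul_of_nonneg_right hLC (ha.pos Q)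
  rw [hE] at f2
  nlinarith

lemma omega {a m : LinearMap.BilinForm ℝ V} (ha : SPB a) (hm : SPB m)
    {η l LM C L : ℝ} (hl : 0 ≤ l) (hLC : 2 * l ≤ C) (hL : 0 ≤ L) (hLM : 0 ≤ LM)
    (hC : 2 * LM + η ^ 2 ≤ C * η) (hlη : l ≤ η) (h2 : 2 * l * η ≤ η ^ 2 + 2 * LM)
    (h3 : 2 * LM ≤ η ^ 2)
    (E G Q T φ : V)
    (hφ : m φ φ ≤ L + l * a T T + LM * m T T)
    (hE : m E φ = m E E + a E T) :
    2 * m (E + G) φ + 2 * η * m (E + G) (T + G + Q) ≤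
      2 * C * (a (T + G + Q) (T + G + Q) + η * m (T + G + Q) (T + G + Q))
      + a (E - Q) (E - Q) + a (G - Q) (G - Q) + m E E + (1 + η) * m (E + G) (E + G)
      + 8 * LM * m G G + 4 * C * (a Q Q + η * m Q Q) + 2 * L := by
  have hd : 0 < 1 + 4 * l := by linarith
  have hp : (1 / (1 + 4 * l)) * (1 + 4 * l) = 1 := by field_simp
  have hp0 : 0 ≤ 1 / (1 + 4 * l) := by positivity
  rcases le_total l (1 / 16) with c1 | c1
  · refine comb ha hm (σ := 2) (s := 1/2) (b := 2 * l) (ρ := 1/2) hl hLC hL hp hp0 ?_ ?_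
      (by norm_num) (by norm_num) (by norm_num) le_rfl hLM hC (by norm_num) (by linarith)
      E G Q T φ ?_ hφ hE
    · have : 4 * l * (1 / (1 + 4 * l)) - 2 * l - (2 * l) ^ 2
        = l * (2 - 12 * l - 16 * l ^ 2) / (1 + 4 * l) := by field_simp; ring
      rw [this]
      apply div_nonneg (mul_nonneg hl (by nlinarith)) hd.le
    · have : (4 * l * (1 / (1 + 4 * l)) - 2 * l - (2 * l) ^ 2) * (8 * l + 16 * l * (1 / (1 + 4 * l)))
        - (8 * l * (1 / (1 + 4 * l)) - 2 * l) ^ 2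
        = l ^ 2 * ((2 - 12 * l - 16 * l ^ 2) * (24 + 32 * l) - (6 - 8 * l) ^ 2) / (1 + 4 * l) ^ 2 := by
        field_simp; ring
      rw [← sub_nonneg, this]
      apply div_nonneg (mul_nonneg (sq_nonneg l) _) (sq_nonneg _)
      nlinarith [pow_nonneg hl 2, pow_nonneg hl 3, mul_nonneg hl (by linarith : 0 ≤ 1/16 - l), mul_nonneg (pow_nonneg hl 2) (by linarith : 0 ≤ 1/16 - l)]
    · have := hm.quad (α := 1 - 2 * (2 * l) - (2 * l) ^ 2 * (1/2)) (β := 2 * l * (1 / 2)) (γ := η)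
        (by nlinarith) (by linarith) (by nlinarith [mul_nonneg hl hl, mul_le_mul_of_nonneg_left hlη (by nlinarith : 0 ≤ 1 - 2 * (2 * l) - (2 * l) ^ 2 * (1/2)), mul_nonneg hl (by linarith : 0 ≤ 1/16 - l), mul_nonneg (pow_nonneg hl 2) (by linarith : 0 ≤ 1/16 - l)]) E (E + G)
      linear_combination this
  have hη : 0 < η := by linarith
  rcases le_total l (1 / 4) with c2 | c2
  · have hsp : 0 < 1 / 2 + 27 / 20 * l := by linarith
    obtain ⟨s, hs⟩ : ∃ s, s = 1 / 2 + 27 / 20 * l := ⟨_, rfl⟩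
    rw [← hs] at hsp
    have hσ2 : 1 / s ≤ 2 := by rw [div_le_iff₀ hsp]; linarith
    have hK : 0 < 2 * η ^ 2 + (4 - 2 * (1 / s)) * LM := by
      have := mul_nonneg (by linarith : 0 ≤ 4 - 2 * (1 / s)) hLM
      positivity
    refine comb ha hm (σ := 1 / s) (s := s) (b := 1 / 5)
      (ρ := η ^ 2 / (2 * η ^ 2 + (4 - 2 * (1 / s)) * LM)) hl hLC hL hp hp0 ?_ ?_
      (by field_simp) hsp.le (by positivity) hσ2 hLM hC (by positivity)
      (le_of_eq (by rw [mul_div_assoc', mul_div_cancel_left₀ _ hK.ne']))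
      E G Q T φ ?_ hφ hE
    · have : 4 * l * (1 / (1 + 4 * l)) - 1 / s * l - (1 / 5) ^ 2
        = (4 * l * s - l * (1 + 4 * l) - (1 + 4 * l) * s / 25) / (s * (1 + 4 * l)) := by
        field_simp
        try ring
      rw [this]
      apply div_nonneg _ (by positivity)
      rw [hs]
      have hx : 0 ≤ l - 1 / 16 := by linarith
      have hy : 0 ≤ 1 / 4 - l := by linarith
      linear_combination 248/225 * mul_nonneg (pow_nonneg hx 0) (pow_nonneg hy 2)
          + 8564/1125 * mul_nonneg (pow_nonneg hx 1) (pow_nonneg hy 1)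
          + 8656/1125 * mul_nonneg (pow_nonneg hx 2) (pow_nonneg hy 0)
    · have : (4 * l * (1 / (1 + 4 * l)) - 1 / s * l - (1 / 5) ^ 2)
          * (8 * l + 16 * l * (1 / (1 + 4 * l))) - (8 * l * (1 / (1 + 4 * l)) - 1 / 5) ^ 2
        = ((4 * l * s - l * (1 + 4 * l) - (1 + 4 * l) * s / 25) * (24 * l + 32 * l ^ 2) -
          s * (8 * l - (1 + 4 * l) / 5) ^ 2) / (s * (1 + 4 * l) ^ 2) := by
        field_simp
        try ring
      rw [← sub_nonneg, this]
      apply div_nonneg _ (by positivity)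
      rw [hs]
      have hx : 0 ≤ l - 1 / 16 := by linarith
      have hy : 0 ≤ 1 / 4 - l := by linarith
      linear_combination 43328/2025 * mul_nonneg (pow_nonneg hx 0) (pow_nonneg hy 4)
          + 1703104/10125 * mul_nonneg (pow_nonneg hx 1) (pow_nonneg hy 3)
          + 924416/3375 * mul_nonneg (pow_nonneg hx 2) (pow_nonneg hy 2)
          + 1067008/10125 * mul_nonneg (pow_nonneg hx 3) (pow_nonneg hy 1)
          + 32768/2025 * mul_nonneg (pow_nonneg hx 4) (pow_nonneg hy 0)
    · have hsc := scal_mid hη hLM h2 h3 c1 c2 hs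
      have hα : 0 < 3 / 5 - s / 25 := by linarith
      have q := hm.quad (α := 3 / 5 - s / 25) (β := s / 5) hα.le
        (by
          have := (sq_nonneg (s / 5)).trans hsc
          exact nonneg_of_mul_nonneg_right this hα) hsc E (E + G)
      have := mul_nonneg (mul_nonneg (by linarith : 0 ≤ 8 - 4 * (1 / s)) hLM) (hm.pos G)
      linear_combination q + this
  · have hden : 0 < η ^ 2 + LM := by positivity
    have hl3 : 0 < l + 3 / 4 := by linarith
    have hσ1 : 1 / (l + 3 / 4) ≤ 1 := by rw [div_le_one hl3]; linarith
    have hσ0 : 0 ≤ 1 / (l + 3 / 4) := by positivity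
    refine comb ha hm (σ := 1 / (l + 3 / 4)) (s := l + 3 / 4) (b := 0)
      (ρ := η ^ 2 / (2 * (η ^ 2 + LM))) hl hLC hL hp hp0 ?_ ?_
      (by field_simp) hl3.le hσ0 (by linarith) hLM hC (by positivity) ?_
      E G Q T φ ?_ hφ hE
    · have : 4 * l * (1 / (1 + 4 * l)) - 1 / (l + 3 / 4) * l - 0 ^ 2
        = l * 8 / ((1 + 4 * l) * (4 * l + 3)) := by field_simp; ring
      rw [this]; positivity
    · apply le_of_eq
      field_simp; ring
    · have h5 : 0 ≤ η ^ 2 / (2 * (η ^ 2 + LM)) := by positivity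
      have h6 : η ^ 2 = (2 * η ^ 2 + 2 * LM) * (η ^ 2 / (2 * (η ^ 2 + LM))) := by field_simp
      nlinarith [mul_nonneg (mul_nonneg (by linarith : 0 ≤ 1 - 1 / (l + 3 / 4)) hLM) h5]
    · set ρ := η ^ 2 / (2 * (η ^ 2 + LM)) with hρ
      set ν := l + ρ - η - 1 / 4 with hν
      have hGG := mul_nonneg (mul_nonneg (by linarith : 0 ≤ 1 - 1 / (l + 3 / 4)) hLM) (hm.pos G)
      have hEE := hm.pos E
      suffices hs : ν * m (E + G) (E + G) ≤ m E E + 4 * LM * m G G by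
        have : 1 + η - (l + 3 / 4) - ρ = - ν := by rw [hν]; ring
        rw [this]
        nlinarith
      have hbd : ν * (1 + 4 * LM) ≤ 4 * LM := scal_big hη hLM h2 h3 c2
      rcases le_total ν 0 with hn | hn
      · have := mul_nonneg hLM (hm.pos G)
        have := mul_nonneg (by linarith : 0 ≤ -ν) (hm.pos (E + G))
        linarith
      · have hν1 : ν ≤ 1 := by
          by_contra hc
          push Not at hc
          nlinarith
        have := hm.quad (α := 1 - ν) (β := -ν) (γ := 4 * LM - ν) (by linarith)
          (by nlinarith) (by nlinarith) E G
        simp only [map_add, LinearMap.add_apply, hm.sym G E]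
        linear_combination this

lemma lie_core {W : Type*} [AddCommGroup W] [Module ℝ W]
    {a m : LinearMap.BilinForm ℝ V} (ha : SPB a) (hm : SPB m)
    {aΓ mΓ : LinearMap.BilinForm ℝ W} (haΓ : SPB aΓ) (hmΓ : SPB mΓ)
    {η l LM C L ηΓ lΓ LMΓ LΓ μ β : ℝ} (hl : 0 ≤ l) (hLC : 2 * l ≤ C) (hL : 0 ≤ L) (hLM : 0 ≤ LM)
    (hC : 2 * LM + η ^ 2 ≤ C * η) (hlη : l ≤ η) (h2 : 2 * l * η ≤ η ^ 2 + 2 * LM)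
    (h3 : 2 * LM ≤ η ^ 2)
    (hηΓ : 0 ≤ ηΓ) (hlΓ : lΓ ≤ C) (hCΓ : LMΓ + ηΓ ^ 2 ≤ C * ηΓ)
    (E G Q T φ : V) (g q ψ : W)
    (hφ : m φ φ ≤ L + l * a T T + LM * m T T)
    (hψ : mΓ ψ ψ ≤ LΓ + lΓ * aΓ (g + q) (g + q) + LMΓ * mΓ (g + q) (g + q))
    (hE : m E φ = m E E + a E T)
    (hG : m G φ = m G E + a G T + mΓ g g + aΓ g (g + q) - mΓ g ψ)
    (hGm : m G G ≤ μ * mΓ g g) (hGa : a G G ≤ β * mΓ g g) :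
    (1 - 2 * C) * (a (T + G + Q) (T + G + Q) + η * m (T + G + Q) (T + G + Q))
      + (1 - 2 * C) * (aΓ (g + q) (g + q) + ηΓ * mΓ (g + q) (g + q))
      + (1 - μ * (1 + 8 * LM) - 2 * β) * mΓ g g
    ≤ (a (T + Q - E) (T + Q - E) + η * m (T + Q - E) (T + Q - E))
      + (aΓ q q + ηΓ * mΓ q q) + 2 * a Q Q + 4 * C * (a Q Q + η * m Q Q) + 2 * (L + LΓ) := by
  have o := omega ha hm hl hLC hL hLM hC hlη h2 h3 E G Q T φ hφ hE
  have g1 := hmΓ.pos ((2 : ℝ) • ψ - g)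
  have g2 := hmΓ.pos ((2 * ηΓ) • (g + q) - g)
  have g3 := mul_le_mul_of_nonneg_right hlΓ (haΓ.pos (g + q))
  have g4 := mul_le_mul_of_nonneg_right hCΓ (hmΓ.pos (g + q))
  have g5 := haΓ.pos g
  have g6 := mul_nonneg hηΓ (hmΓ.pos g)
  have g7 := mul_le_mul_of_nonneg_left hGm (by linarith : 0 ≤ 1 + 8 * LM)
  simp only [map_add, map_sub, map_smul, LinearMap.add_apply, LinearMap.sub_apply,
    LinearMap.smul_apply, smul_eq_mul,
    ha.sym G E, ha.sym Q E, ha.sym T E, ha.sym Q G, ha.sym T G, ha.sym T Q,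
    hm.sym G E, hm.sym Q E, hm.sym T E, hm.sym Q G, hm.sym T G, hm.sym T Q,
    haΓ.sym q g, hmΓ.sym q g, hmΓ.sym ψ g, hmΓ.sym ψ q] at *
  linear_combination o + 1 / 2 * g1 + 1 / 2 * g2 + 2 * g3 + 2 * g4 + g5 + g6 + g7 + 2 * hGa
    + 2 * hψ - 2 * hE - 2 * hG

lemma eta_props {LA LM C : ℝ} (hLA : 0 ≤ LA) (hLM : 0 ≤ LM) (hC1 : 2 * LA ≤ C)
    (hC2 : Real.sqrt (8 * LM) ≤ C) :
    LA ≤ etaConst LA LM ∧ 2 * LM + etaConst LA LM ^ 2 ≤ C * etaConst LA LM ∧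
    2 * LA * etaConst LA LM ≤ etaConst LA LM ^ 2 + 2 * LM ∧ 2 * LM ≤ etaConst LA LM ^ 2 := by
  have h8 : Real.sqrt (8 * LM) = 2 * Real.sqrt (2 * LM) := by
    rw [show 8 * LM = 2 ^ 2 * (2 * LM) by ring, Real.sqrt_mul (by norm_num),
      Real.sqrt_sq (by norm_num)]
  rw [h8] at hC2
  have hq := Real.sq_sqrt (by linarith : 0 ≤ 2 * LM)
  have hq0 := Real.sqrt_nonneg (2 * LM)
  unfold etaConst
  split_ifs with h
  · refine ⟨h.le, ?_, ?_, ?_⟩ <;> nlinarith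
  · push Not at h
    have h5 : 2 * LM ≤ LA ^ 2 := by nlinarith
    have hr := Real.sq_sqrt (by linarith : 0 ≤ LA ^ 2 - 2 * LM)
    have hr0 := Real.sqrt_nonneg (LA ^ 2 - 2 * LM)
    refine ⟨by linarith, ?_, ?_, ?_⟩ <;> nlinarith

end LieAux

lemma spb_toBilin {n : Type*} [Fintype n] [DecidableEq n] {S : Matrix n n ℝ}
    (hS : S.PosSemidef) : SPB (Matrix.toBilin' S) := by
  constructor
  · intro x y
    have hs : Sᵀ = S := by
      have := hS.1
      simpa [Matrix.IsHermitian, Matrix.conjTranspose_eq_transpose_of_trivial] using this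
    rw [Matrix.toBilin'_apply', Matrix.toBilin'_apply', dotProduct_comm,
      Matrix.dotProduct_mulVec y S x, ← Matrix.mulVec_transpose, hs]
  · intro x
    rw [Matrix.toBilin'_apply']
    simpa using hS.dotProduct_mulVec_nonneg x

lemma spb_smul {V : Type*} [AddCommGroup V] [Module ℝ V] {B : LinearMap.BilinForm ℝ V}
    (hB : SPB B) {c : ℝ} (hc : 0 ≤ c) : SPB (c • B) := by
  constructor
  · intro x y
    simp only [LinearMap.smul_apply, smul_eq_mul, hB.sym x y]
  · intro x
    simp only [LinearMap.smul_apply, smul_eq_mul]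
    exact mul_nonneg hc (hB.pos x)

lemma mulVec_inv_cancel {n : Type*} [Fintype n] [DecidableEq n] {S : Matrix n n ℝ}
    (hS : S.PosDef) (x : n → ℝ) : S *ᵥ (S⁻¹ *ᵥ x) = x := by
  have hu : IsUnit S.det := (Matrix.isUnit_iff_isUnit_det S).mp hS.isUnit
  rw [Matrix.mulVec_mulVec, Matrix.mul_nonsing_inv S hu, Matrix.one_mulVec]

lemma vns_add_smul {n : Type*} [Fintype n] (A B : Matrix n n ℝ) (c : ℝ) (x : n → ℝ) :
    vecNormSq (A + c • B) x = vecNormSq A x + c * vecNormSq B x := by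
  simp [vecNormSq, Matrix.add_mulVec, Matrix.smul_mulVec]

lemma vns_smul {n : Type*} [Fintype n] (A : Matrix n n ℝ) (c : ℝ) (x : n → ℝ) :
    vecNormSq A (c • x) = c ^ 2 * vecNormSq A x := by
  simp [vecNormSq, Matrix.mulVec_smul]
  ring

lemma vns_block {k l : Type*} [Fintype k] [Fintype l] (A : Matrix k k ℝ) (B : Matrix k l ℝ)
    (C : Matrix l k ℝ) (D : Matrix l l ℝ) (z : l → ℝ) :
    vecNormSq (Matrix.fromBlocks A B C D) (Sum.elim 0 z) = vecNormSq D z := by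
  simp [vecNormSq, Matrix.fromBlocks_mulVec]


set_option maxHeartbeats 4000000

/-- **Local error of the first step for semi-linear problems (Lemma A.2).** -/
theorem lie_splitting_local_error_semilinear
    (N₁ N₂ : ℕ) (hN₁ : 0 < N₁) (hN₂ : 0 < N₂)
    (M₁₁ A₁₁ : Matrix (Fin N₁) (Fin N₁) ℝ)
    (M₁₂ A₁₂ : Matrix (Fin N₁) (Fin N₂) ℝ)
    (M₂₁ A₂₁ : Matrix (Fin N₂) (Fin N₁) ℝ)
    (M₂₂ A₂₂ MΓ AΓ : Matrix (Fin N₂) (Fin N₂) ℝ)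
    (hM : (Matrix.fromBlocks M₁₁ M₁₂ M₂₁ M₂₂).PosDef)
    (hA : (Matrix.fromBlocks A₁₁ A₁₂ A₂₁ A₂₂).PosSemidef)
    (hM21 : M₂₁ = M₁₂ᵀ) (hA21 : A₂₁ = A₁₂ᵀ)
    (hMΓ : MΓ.PosDef) (hAΓ : AΓ.PosSemidef)
    -- constants
    (τ h cM cinv αΩ : ℝ)
    (hτ : 0 < τ) (hh : 0 < h) (hcM : 0 < cM) (hcinv : 0 < cinv) (hαΩ : 0 ≤ αΩ)
    -- boundary mass estimate and inverse estimate
    (hmass : ∀ z : Fin N₂ → ℝ, vecNormSq M₂₂ z ≤ cM * h * vecNormSq MΓ z)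
    (hinv : ∀ z : Fin N₂ → ℝ, vecNormSq A₂₂ z ≤ (αΩ + cinv / h ^ 2) * vecNormSq M₂₂ z)
    -- weak CFL condition
    (hCFL : 7 * cinv * cM * τ < 3 * h)
    -- the semi-linear right-hand sides and their Lipschitz constants
    (fΩ : ℝ → (Fin N₁ ⊕ Fin N₂ → ℝ) → (Fin N₁ ⊕ Fin N₂ → ℝ))
    (fΓ : ℝ → (Fin N₂ → ℝ) → (Fin N₂ → ℝ))
    (LΩ LA LM LΓ LAΓ LMΓ : ℝ)
    (hLΩ : 0 ≤ LΩ) (hLA : 0 ≤ LA) (hLM : 0 ≤ LM)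
    (hLΓ : 0 ≤ LΓ) (hLAΓ : 0 ≤ LAΓ) (hLMΓ : 0 ≤ LMΓ)
    (hLipΩ : ∀ (t t' : ℝ) (u u' : Fin N₁ ⊕ Fin N₂ → ℝ),
      vecNormSq (Matrix.fromBlocks M₁₁ M₁₂ M₂₁ M₂₂)⁻¹ (fΩ t u - fΩ t' u') ≤
        LΩ * |t - t'| ^ 2
          + LA * vecNormSq (Matrix.fromBlocks A₁₁ A₁₂ A₂₁ A₂₂) (u - u')
          + LM * vecNormSq (Matrix.fromBlocks M₁₁ M₁₂ M₂₁ M₂₂) (u - u'))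
    (hLipΓ : ∀ (t t' : ℝ) (q q' : Fin N₂ → ℝ),
      vecNormSq MΓ⁻¹ (fΓ t q - fΓ t' q') ≤
        LΓ * |t - t'| ^ 2 + LAΓ * vecNormSq AΓ (q - q') + LMΓ * vecNormSq MΓ (q - q'))
    -- the discrete sequences
    (u₁ : ℕ → Fin N₁ → ℝ) (p dtp : ℕ → Fin N₂ → ℝ)
    (hdtp : ∀ n : ℕ, dtp (n + 1) = τ⁻¹ • (p (n + 1) - p n))
    -- the semi-linear Lie splitting scheme
    (hscheme₁ : ∀ n : ℕ,
      M₁₁.mulVec (τ⁻¹ • (u₁ (n + 1) - u₁ n)) + A₁₁.mulVec (u₁ (n + 1)) =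
        (fun i => fΩ ((n + 1) * τ) (Sum.elim (u₁ (n + 1)) (p n)) (Sum.inl i))
          - M₁₂.mulVec (dtp n) - A₁₂.mulVec (p n))
    (hscheme₂ : ∀ n : ℕ,
      MΓ.mulVec (dtp (n + 1)) + AΓ.mulVec (p (n + 1)) =
        fΓ ((n + 1) * τ) (p (n + 1))
          + (fun j => fΩ ((n + 1) * τ) (Sum.elim (u₁ (n + 1)) (p n)) (Sum.inr j))
          - M₂₂.mulVec (dtp n) - A₂₂.mulVec (p n)
          - M₂₁.mulVec (τ⁻¹ • (u₁ (n + 1) - u₁ n)) - A₂₁.mulVec (u₁ (n + 1)))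
    -- consistent initial data: u̇₁(0) and ṗ(0)
    (du₁0 : Fin N₁ → ℝ) (dp0 : Fin N₂ → ℝ)
    (hcons₁ : M₁₁.mulVec du₁0 + M₁₂.mulVec dp0 + A₁₁.mulVec (u₁ 0) + A₁₂.mulVec (p 0) =
      fun i => fΩ 0 (Sum.elim (u₁ 0) (p 0)) (Sum.inl i))
    (hcons₂ : M₂₁.mulVec du₁0 + (M₂₂ + MΓ).mulVec dp0 + A₂₁.mulVec (u₁ 0)
        + (A₂₂ + AΓ).mulVec (p 0) =
      (fun j => fΩ 0 (Sum.elim (u₁ 0) (p 0)) (Sum.inr j)) + fΓ 0 (p 0))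
    -- ∂_τ p⁰ = ṗ(0)
    (hinit : dtp 0 = dp0) :
    (1 - 2 * τ * max (max (2 * LA) (Real.sqrt (8 * LM))) (max LAΓ (2 * Real.sqrt LMΓ)))
        * vecNormSq
            (Matrix.fromBlocks A₁₁ A₁₂ A₂₁ A₂₂
              + etaConst LA LM • Matrix.fromBlocks M₁₁ M₁₂ M₂₁ M₂₂)
            (Sum.elim (u₁ 1) (p 1) - Sum.elim (u₁ 0) (p 0))
      + (1 - 2 * τ * max (max (2 * LA) (Real.sqrt (8 * LM))) (max LAΓ (2 * Real.sqrt LMΓ)))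
          * vecNormSq (AΓ + etaConst (LAΓ / 2) (LMΓ / 2) • MΓ) (p 1 - p 0)
      + τ * (1 - cM * h * (1 + 8 * τ ^ 2 * LM)
            - ((cM * αΩ) * τ * h + (cM * cinv) * τ / h) * (2 + 8 * τ ^ 2 * LA))
          * vecNormSq MΓ (dtp 1 - dp0)
    ≤ τ ^ 2 * vecNormSq
          (Matrix.fromBlocks A₁₁ A₁₂ A₂₁ A₂₂
            + etaConst LA LM • Matrix.fromBlocks M₁₁ M₁₂ M₂₁ M₂₂)
          (Sum.elim du₁0 dp0)
      + τ ^ 2 * vecNormSq (AΓ + etaConst (LAΓ / 2) (LMΓ / 2) • MΓ) dp0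
      + 2 * τ ^ 2 * vecNormSq A₂₂ dp0
      + 4 * τ ^ 3 * max (max (2 * LA) (Real.sqrt (8 * LM))) (max LAΓ (2 * Real.sqrt LMΓ))
          * vecNormSq (A₂₂ + etaConst LA LM • M₂₂) dp0
      + 2 * τ ^ 3 * (LΩ + LΓ) := by
  have hτ0 := hτ.ne'
  set C := max (max (2 * LA) (Real.sqrt (8 * LM))) (max LAΓ (2 * Real.sqrt LMΓ)) with hCdef
  have hC1 : 2 * LA ≤ C := le_trans (le_max_left _ _) (le_max_left _ _)
  have hC2 : Real.sqrt (8 * LM) ≤ C := le_trans (le_max_right _ _) (le_max_left _ _)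
  have hC3 : LAΓ ≤ C := le_trans (le_max_left _ _) (le_max_right _ _)
  have hC4 : 2 * Real.sqrt LMΓ ≤ C := le_trans (le_max_right _ _) (le_max_right _ _)
  obtain ⟨e1, e2, e3, e4⟩ := eta_props hLA hLM hC1 hC2
  have hC4' : Real.sqrt (8 * (LMΓ / 2)) ≤ C := by
    rw [show 8 * (LMΓ / 2) = 2 ^ 2 * LMΓ by ring, Real.sqrt_mul (by norm_num),
      Real.sqrt_sq (by norm_num)]
    exact hC4
  obtain ⟨k1, k2, k3, k4⟩ := eta_props (LA := LAΓ / 2) (LM := LMΓ / 2) (by positivity)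
    (by positivity) (by linarith : 2 * (LAΓ / 2) ≤ C) hC4'
  clear_value C
  set η := etaConst LA LM with hη
  set ηΓ := etaConst (LAΓ / 2) (LMΓ / 2) with hηΓ
  clear_value η ηΓ
  have s1 := hscheme₁ 0
  have s2 := hscheme₂ 0
  have hd := hdtp 0
  simp only [Nat.cast_zero, zero_add, one_mul, hinit] at s1 s2 hd
  set d1 : Fin N₁ → ℝ := τ⁻¹ • (u₁ 1 - u₁ 0) with hd1
  set P := dtp 1 with hP
  have hu1 : u₁ 1 = u₁ 0 + τ • d1 := by
    rw [hd1, smul_inv_smul₀ hτ0]; abel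
  have hp1 : p 1 = p 0 + τ • P := by
    rw [hd, smul_inv_smul₀ hτ0]; abel
  clear_value d1 P
  set 𝓜 := Matrix.fromBlocks M₁₁ M₁₂ M₂₁ M₂₂ with h𝓜
  set 𝓐 := Matrix.fromBlocks A₁₁ A₁₂ A₂₁ A₂₂ with h𝓐
  set F1 := fΩ τ (Sum.elim (u₁ 1) (p 0)) with hF1
  set F0 := fΩ 0 (Sum.elim (u₁ 0) (p 0)) with hF0
  set H1 := fΓ τ (p 1) with hH1
  set H0 := fΓ 0 (p 0) with hH0
  have lip := hLipΩ τ 0 (Sum.elim (u₁ 1) (p 0)) (Sum.elim (u₁ 0) (p 0))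
  have lipΓ := hLipΓ τ 0 (p 1) (p 0)
  rw [← hF1, ← hF0] at lip
  rw [← hH1, ← hH0] at lipΓ
  have ht : |τ - 0| ^ 2 = τ ^ 2 := by rw [sub_zero, sq_abs]
  have hT : Sum.elim (u₁ 1) (p 0) - Sum.elim (u₁ 0) (p 0) = τ • (Sum.elim d1 0 : Fin N₁ ⊕ Fin N₂ → ℝ) := by
    ext i; rcases i with i | i <;> simp [hu1]
  have hpd : p 1 - p 0 = τ • P := by rw [hp1]; abel
  have hX : Sum.elim (u₁ 1) (p 1) - Sum.elim (u₁ 0) (p 0) = τ • (Sum.elim d1 P : Fin N₁ ⊕ Fin N₂ → ℝ) := by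
    ext i; rcases i with i | i <;> simp [hu1, hp1]
  rw [ht, hT, vns_smul, vns_smul] at lip
  rw [ht, hpd, vns_smul, vns_smul] at lipΓ
  rw [hX, hpd]
  have q1 : M₁₁ *ᵥ (d1 - du₁0) + τ • (A₁₁ *ᵥ d1) = fun i => (F1 - F0) (Sum.inl i) := by
    funext i
    have y1 := congrFun s1 i
    have y2 := congrFun hcons₁ i
    rw [hu1, Matrix.mulVec_add, Matrix.mulVec_smul] at y1
    simp only [Pi.add_apply, Pi.sub_apply, Pi.smul_apply, smul_eq_mul, Matrix.mulVec_sub]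
      at y1 y2 ⊢
    linarith
  have q2 : MΓ *ᵥ (P - dp0) + τ • (AΓ *ᵥ P) + M₂₁ *ᵥ (d1 - du₁0) + τ • (A₂₁ *ᵥ d1)
      = (fun j => (F1 - F0) (Sum.inr j)) + (H1 - H0) := by
    funext i
    have y1 := congrFun s2 i
    have y2 := congrFun hcons₂ i
    rw [hu1, hp1] at y1
    simp only [Pi.add_apply, Pi.sub_apply, Pi.smul_apply, smul_eq_mul, Matrix.mulVec_sub,
      Matrix.mulVec_add, Matrix.mulVec_smul, Matrix.add_mulVec] at y1 y2 ⊢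
    linarith
  clear_value F1 F0 H1 H0
  have hfin := lie_core (spb_smul (spb_toBilin hA) hτ.le) (spb_toBilin hM.posSemidef)
    (spb_smul (spb_toBilin hAΓ) hτ.le) (spb_toBilin hMΓ.posSemidef)
    (η := τ * η) (l := τ * LA) (LM := τ ^ 2 * LM) (C := τ * C) (L := τ ^ 2 * LΩ)
    (ηΓ := τ * ηΓ) (lΓ := τ * LAΓ) (LMΓ := τ ^ 2 * LMΓ) (LΓ := τ ^ 2 * LΓ)
    (μ := cM * h) (β := (cM * αΩ) * τ * h + (cM * cinv) * τ / h)
    (by positivity) (by nlinarith) (by positivity) (by positivity)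
    (by nlinarith [mul_le_mul_of_nonneg_left e2 (sq_nonneg τ)])
    (by nlinarith)
    (by nlinarith [mul_le_mul_of_nonneg_left e3 (sq_nonneg τ)])
    (by nlinarith [mul_le_mul_of_nonneg_left e4 (sq_nonneg τ)])
    (by have : 0 ≤ ηΓ := le_trans (by positivity) k1
        positivity)
    (by nlinarith)
    (by nlinarith [mul_le_mul_of_nonneg_left k2 (sq_nonneg τ)])
    (Sum.elim (d1 - du₁0) 0) (Sum.elim 0 (P - dp0)) (Sum.elim 0 dp0) (Sum.elim d1 0)
    (𝓜⁻¹ *ᵥ (F1 - F0)) (P - dp0) dp0 (MΓ⁻¹ *ᵥ (H1 - H0))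
    (by
      simp only [LinearMap.smul_apply, smul_eq_mul, Matrix.toBilin'_apply', mulVec_inv_cancel hM]
      rw [dotProduct_comm]
      simp only [vecNormSq] at lip
      linarith)
    (by
      simp only [LinearMap.smul_apply, smul_eq_mul, Matrix.toBilin'_apply', mulVec_inv_cancel hMΓ,
        sub_add_cancel]
      rw [dotProduct_comm]
      simp only [vecNormSq] at lipΓ
      linarith)
    (by
      simp only [LinearMap.smul_apply, smul_eq_mul, Matrix.toBilin'_apply', mulVec_inv_cancel hM]
      have w := congrArg (fun v => (d1 - du₁0) ⬝ᵥ v) q1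
      simp only [dotProduct_add, dotProduct_smul, smul_eq_mul] at w
      have w2 : (Sum.elim (d1 - du₁0) 0 : Fin N₁ ⊕ Fin N₂ → ℝ) ⬝ᵥ (F1 - F0)
        = (d1 - du₁0) ⬝ᵥ (fun i => (F1 - F0) (Sum.inl i)) := by
        simp [dotProduct]
      rw [w2, ← w, h𝓜, h𝓐, Matrix.fromBlocks_mulVec, Matrix.fromBlocks_mulVec,
        sumElim_dotProduct_sumElim, sumElim_dotProduct_sumElim]
      simp only [zero_dotProduct, Sum.elim_comp_inl, Sum.elim_comp_inr, Matrix.mulVec_zero,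
        add_zero])
    (by
      simp only [LinearMap.smul_apply, smul_eq_mul, Matrix.toBilin'_apply', mulVec_inv_cancel hM,
        mulVec_inv_cancel hMΓ, sub_add_cancel]
      have w := congrArg (fun v => (P - dp0) ⬝ᵥ v) q2
      simp only [dotProduct_add, dotProduct_smul, smul_eq_mul] at w
      have w2 : (Sum.elim 0 (P - dp0) : Fin N₁ ⊕ Fin N₂ → ℝ) ⬝ᵥ (F1 - F0)
        = (P - dp0) ⬝ᵥ (fun i => (F1 - F0) (Sum.inr i)) := by
        simp [dotProduct]
      rw [w2, h𝓜, h𝓐, Matrix.fromBlocks_mulVec, Matrix.fromBlocks_mulVec,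
        sumElim_dotProduct_sumElim, sumElim_dotProduct_sumElim]
      simp only [zero_dotProduct, Sum.elim_comp_inl, Sum.elim_comp_inr, Matrix.mulVec_zero,
        add_zero, zero_add]
      linarith)
    (by
      have b := vns_block M₁₁ M₁₂ M₂₁ M₂₂ (P - dp0)
      have c := hmass (P - dp0)
      rw [← b] at c
      simpa only [Matrix.toBilin'_apply', vecNormSq] using c)
    (by
      have b := vns_block A₁₁ A₁₂ A₂₁ A₂₂ (P - dp0)
      have c := hmass (P - dp0)
      have d := (hinv (P - dp0)).trans (mul_le_mul_of_nonneg_left c (by positivity))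
      have d' := mul_le_mul_of_nonneg_left d hτ.le
      rw [← b] at d'
      simp only [LinearMap.smul_apply, smul_eq_mul, Matrix.toBilin'_apply']
      simp only [vecNormSq] at d'
      refine d'.trans (le_of_eq ?_)
      field_simp)
  have r1 : (Sum.elim d1 0 + Sum.elim (0 : Fin N₁ → ℝ) (P - dp0) + Sum.elim (0 : Fin N₁ → ℝ) dp0 : Fin N₁ ⊕ Fin N₂ → ℝ)
      = Sum.elim d1 P := by
    ext i; rcases i with i | i <;> simp
  have r2 : (Sum.elim d1 0 + Sum.elim (0 : Fin N₁ → ℝ) dp0 - Sum.elim (d1 - du₁0) 0 : Fin N₁ ⊕ Fin N₂ → ℝ)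
      = Sum.elim du₁0 dp0 := by
    ext i; rcases i with i | i <;> simp
  rw [r1, r2] at hfin
  have v1 := vns_block M₁₁ M₁₂ M₂₁ M₂₂ dp0
  have v2 := vns_block A₁₁ A₁₂ A₂₁ A₂₂ dp0
  rw [← h𝓜] at v1
  rw [← h𝓐] at v2
  simp only [LinearMap.smul_apply, smul_eq_mul, Matrix.toBilin'_apply', sub_add_cancel] at hfin
  simp only [← vecNormSq.eq_1, v1, v2] at hfin
  simp only [vns_add_smul, vns_smul]
  have hg : 0 ≤ vecNormSq MΓ (P - dp0) := by
    simpa [vecNormSq] using hMΓ.posSemidef.dotProduct_mulVec_nonneg (P - dp0)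
  have hdrop : 0 ≤ τ * (((cM * αΩ) * τ * h + (cM * cinv) * τ / h) * (8 * τ ^ 2 * LA))
      * vecNormSq MΓ (P - dp0) := by positivity
  linear_combination τ * hfin + hdrop
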